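/- arXiv:2210.02103 — 4 statements merged into one kernel-verified Lean document; each statement's English description precedes it below -/
import Mathlib

section
/- Let (k,′) be a differential field of characteristic zero with algebraic closure k̄, equipped with the unique extension of ′ to k̄. Let a ∈ k, and let θ ∈ k̄ be a nonzero element with θ′ = aθ such that n := [k(θ):k] is minimal among the degrees [k(σ):k] over all nonzero σ ∈ k̄ satisfying σ′ = aσ. Then θⁿ ∈ k; equivalently, the minimal polynomial of θ over k has the form Xⁿ + a₀ with a₀ ∈ k. -/
open scoped TensorProduct

/-- A derivation on a (possibly noncommutative) ring: an additive map satisfying the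
Leibniz rule. -/
structure IsRingDeriv {A : Type*} [Ring A] (d : A → A) : Prop where
  map_add : ∀ x y, d (x + y) = d x + d y
  leibniz : ∀ x y, d (x * y) = d x * y + x * d y

/-- The derivation `d` on the `k`-algebra `A` restricts to the derivation `δ` on `k`
(along `algebraMap k A`). -/
def RestrictsTo {k A : Type*} [CommRing k] [Ring A] [Algebra k A]
    (δ : k → k) (d : A → A) : Prop :=
  ∀ c : k, d (algebraMap k A c) = algebraMap k A (δ c)

/-!
Let `p` be the minimal polynomial of `θ` and `n` its degree. The derivation `D` of `k[X]` extending
that of `k` with `D X = a X` satisfies `(D p)(θ) = p(θ)′ = 0`, so `p ∣ D p`; comparing degrees and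
leading coefficients gives `D p = n a p`, that is, `cᵢ′ = (n - i) a cᵢ` for every coefficient `cᵢ`
of `p`. If `cᵢ ≠ 0` with `0 < i < n`, then an `(n - i)`-th root `σ` of `cᵢ` solves `σ′ = a σ` and
has degree at most `n - i < n`, against minimality. Hence `p = Xⁿ + c₀`.
-/

open Polynomial IntermediateField
open Differential (implicitDeriv)
open scoped Differential

/-- The `Differential` structure on a commutative ring given by a map satisfying `IsRingDeriv`. -/
@[reducible]
def IsRingDeriv.differential {A : Type*} [CommRing A] {d : A → A} (hd : IsRingDeriv d) :
    Differential A where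
  deriv := Derivation.mk' (AddMonoidHom.mk' d hd.map_add).toIntLinearMap fun x y => by
    simpa [mul_comm y, add_comm] using hd.leibniz x y

section CommRing

variable {A : Type*} [CommRing A] [Differential A]

theorem coeff_implicitDeriv_C_mul_X (a : A) (f : A[X]) (i : ℕ) :
    (implicitDeriv (C a * X) f).coeff i = (f.coeff i)′ + i * a * f.coeff i := by
  have coeff_X_mul_derivative : (X * derivative f).coeff i = i * f.coeff i := by
    cases i with
    | zero => simp
    | succ j => rw [coeff_X_mul, coeff_derivative]; push_cast; ring
  simp only [implicitDeriv, Derivation.add_apply, Derivation.smul_apply,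
    Derivation.restrictScalars_apply, derivative'_apply, smul_eq_mul, coeff_add,
    Differential.coeff_mapCoeffs, mul_assoc, coeff_C_mul, coeff_X_mul_derivative]
  ring

theorem natDegree_implicitDeriv_C_mul_X_le (a : A) (f : A[X]) :
    (implicitDeriv (C a * X) f).natDegree ≤ f.natDegree := by
  refine natDegree_le_iff_coeff_eq_zero.2 fun i hi => ?_
  simp [coeff_implicitDeriv_C_mul_X, coeff_eq_zero_of_natDegree_lt hi]

theorem implicitDeriv_C_mul_X_eq_of_monic_of_dvd {a : A} {f : A[X]} (hf : f.Monic)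
    (hdvd : f ∣ implicitDeriv (C a * X) f) :
    implicitDeriv (C a * X) f = C (f.natDegree * a) * f := by
  have eq_C_mul := eq_leadingCoeff_mul_of_monic_of_dvd_of_natDegree_le hf hdvd
    (natDegree_implicitDeriv_C_mul_X_le a f)
  have leadingCoeff_eq := congrArg (coeff · f.natDegree) eq_C_mul
  simp only [coeff_implicitDeriv_C_mul_X, coeff_C_mul, hf.coeff_natDegree,
    Derivation.map_one_eq_zero, zero_add, mul_one] at leadingCoeff_eq
  rwa [← leadingCoeff_eq] at eq_C_mul

theorem deriv_eq_mul_of_deriv_pow_eq [IsDomain A] {m : ℕ} (hm : (m : A) ≠ 0) {b x : A}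
    (hx : x ≠ 0) (h : (x ^ m)′ = m * b * x ^ m) : x′ = b * x := by
  have m_ne_zero : m ≠ 0 := by rintro rfl; simp at hm
  rw [Derivation.leibniz_pow, smul_eq_mul, nsmul_eq_mul, ← mul_pow_sub_one m_ne_zero x] at h
  refine mul_left_cancel₀ (mul_ne_zero hm (pow_ne_zero (m - 1) hx)) ?_
  linear_combination h

end CommRing

theorem eq_X_pow_add_C_of_monic {R : Type*} [Semiring R] {f : R[X]} (hf : f.Monic)
    (hdeg : 0 < f.natDegree) (hcoeff : ∀ i, 0 < i → i < f.natDegree → f.coeff i = 0) :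
    f = X ^ f.natDegree + C (f.coeff 0) := by
  ext i
  rw [coeff_add, coeff_X_pow, coeff_C]
  rcases Nat.eq_zero_or_pos i with rfl | hi
  · simp [hdeg.ne]
  · rcases lt_trichotomy i f.natDegree with hlt | rfl | hgt
    · simp [hcoeff i hi hlt, hi.ne', hlt.ne]
    · simp [hf.coeff_natDegree, hi.ne']
    · simp [coeff_eq_zero_of_natDegree_lt hgt, hi.ne', hgt.ne']

theorem finrank_adjoin_simple_le_of_pow_eq {k K : Type*} [Field k] [Field K] [Algebra k K]
    {x : K} {c : k} {m : ℕ} (hm : 0 < m) (hx : x ^ m = algebraMap k K c) :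
    Module.finrank k k⟮x⟯ ≤ m := by
  have monic_f : (X ^ m - C c).Monic := monic_X_pow_sub_C c hm.ne'
  have aeval_f : aeval x (X ^ m - C c) = 0 := by simp [hx]
  rw [adjoin.finrank ⟨_, monic_f, aeval_f⟩, ← natDegree_X_pow_sub_C (n := m) (r := c)]
  exact natDegree_le_natDegree (minpoly.min k x monic_f aeval_f)

section Field

variable {k : Type*} [Field k] [Differential k]

theorem deriv_coeff_minpoly {B : Type*} [CommRing B] [Differential B] [Algebra k B]
    [DifferentialAlgebra k B] {a : k} {θ : B} (hint : IsIntegral k θ)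
    (hθ : θ′ = algebraMap k B a * θ) (i : ℕ) :
    ((minpoly k θ).coeff i)′ = ((minpoly k θ).natDegree - i) * a * (minpoly k θ).coeff i := by
  have minpoly_dvd : minpoly k θ ∣ implicitDeriv (C a * X) (minpoly k θ) := by
    refine minpoly.dvd k θ ?_
    rw [← Differential.deriv_aeval_eq_implicitDeriv θ (C a * X) (by simpa using hθ),
      minpoly.aeval, map_zero]
  have coeff_eq := congrArg (coeff · i)
    (implicitDeriv_C_mul_X_eq_of_monic_of_dvd (minpoly.monic hint) minpoly_dvd)
  simp only [coeff_implicitDeriv_C_mul_X, coeff_C_mul] at coeff_eq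
  linear_combination coeff_eq

variable [CharZero k] {K : Type*} [Field K] [IsAlgClosed K] [Differential K] [Algebra k K]
  [DifferentialAlgebra k K] {a : k} {θ : K}

theorem exists_pow_eq_coeff_minpoly_and_deriv_eq (hint : IsIntegral k θ)
    (hθ : θ′ = algebraMap k K a * θ) {i : ℕ} (hi : i < (minpoly k θ).natDegree)
    (hcoeff : (minpoly k θ).coeff i ≠ 0) :
    ∃ σ : K, σ ≠ 0 ∧ σ′ = algebraMap k K a * σ ∧
      σ ^ ((minpoly k θ).natDegree - i) = algebraMap k K ((minpoly k θ).coeff i) := by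
  set c := (minpoly k θ).coeff i
  set m := (minpoly k θ).natDegree - i
  have m_pos : 0 < m := Nat.sub_pos_of_lt hi
  have : CharZero K := charZero_of_injective_algebraMap (algebraMap k K).injective
  obtain ⟨σ, hσ⟩ := IsAlgClosed.exists_pow_nat_eq (algebraMap k K c) m_pos
  have σ_ne_zero : σ ≠ 0 := by
    refine ne_zero_pow m_pos.ne' ?_
    rwa [hσ, _root_.map_ne_zero]
  refine ⟨σ, σ_ne_zero, ?_, hσ⟩
  refine deriv_eq_mul_of_deriv_pow_eq (Nat.cast_ne_zero.2 m_pos.ne') σ_ne_zero ?_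
  have deriv_c : c′ = m * a * c := by
    rw [Nat.cast_sub hi.le]
    exact deriv_coeff_minpoly hint hθ i
  rw [hσ, deriv_algebraMap, deriv_c, map_mul, map_mul, map_natCast]

theorem minpoly_eq_X_pow_add_C_of_finrank_minimal (hint : IsIntegral k θ)
    (hθ : θ′ = algebraMap k K a * θ)
    (hmin : ∀ σ : K, IsIntegral k σ → σ ≠ 0 → σ′ = algebraMap k K a * σ →
      Module.finrank k k⟮θ⟯ ≤ Module.finrank k k⟮σ⟯) :
    minpoly k θ = X ^ (minpoly k θ).natDegree + C ((minpoly k θ).coeff 0) := by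
  refine eq_X_pow_add_C_of_monic (minpoly.monic hint) (minpoly.natDegree_pos hint)
    fun i hi hin => ?_
  by_contra hcoeff
  obtain ⟨σ, σ_ne_zero, deriv_σ, hσ⟩ :=
    exists_pow_eq_coeff_minpoly_and_deriv_eq hint hθ hin hcoeff
  have m_pos : 0 < (minpoly k θ).natDegree - i := Nat.sub_pos_of_lt hin
  have σ_integral : IsIntegral k σ := .of_pow m_pos (hσ ▸ isIntegral_algebraMap)
  have degree_le : (minpoly k θ).natDegree ≤ (minpoly k θ).natDegree - i :=
    calc (minpoly k θ).natDegree = Module.finrank k k⟮θ⟯ := (adjoin.finrank hint).symm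
      _ ≤ Module.finrank k k⟮σ⟯ := hmin σ σ_integral σ_ne_zero deriv_σ
      _ ≤ (minpoly k θ).natDegree - i := finrank_adjoin_simple_le_of_pow_eq m_pos hσ
  omega

theorem stmt_0_general (hint : IsIntegral k θ) (hθ : θ′ = algebraMap k K a * θ)
    (hmin : ∀ σ : K, IsIntegral k σ → σ ≠ 0 → σ′ = algebraMap k K a * σ →
      Module.finrank k k⟮θ⟯ ≤ Module.finrank k k⟮σ⟯) :
    ∃ c : k, θ ^ Module.finrank k k⟮θ⟯ = algebraMap k K c := by
  have aeval_minpoly := minpoly.aeval k θ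
  rw [minpoly_eq_X_pow_add_C_of_finrank_minimal hint hθ hmin, map_add, map_pow, aeval_X, aeval_C,
    ← adjoin.finrank hint] at aeval_minpoly
  exact ⟨-(minpoly k θ).coeff 0, by rw [map_neg, eq_neg_of_add_eq_zero_left aeval_minpoly]⟩

end Field

/-- Let `(k, ′)` be a differential field of characteristic zero with
algebraic closure `K` carrying the extended derivation. If `θ ≠ 0` satisfies `θ′ = aθ`
with `a ∈ k` and `n := [k(θ) : k]` minimal among all nonzero solutions, then `θ^n ∈ k`. -/
theorem stmt_0 (k : Type*) [Field k] [CharZero k]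
    (δk : k → k) (hδk : IsRingDeriv δk)
    (K : Type*) [Field K] [Algebra k K] [IsAlgClosure k K]
    (δK : K → K) (hδK : IsRingDeriv δK) (hres : RestrictsTo δk δK)
    (a : k) (θ : K) (hθ0 : θ ≠ 0)
    (hθ : δK θ = algebraMap k K a * θ)
    (hmin : ∀ σ : K, σ ≠ 0 → δK σ = algebraMap k K a * σ →
      Module.finrank k ↥(IntermediateField.adjoin k {θ}) ≤
        Module.finrank k ↥(IntermediateField.adjoin k {σ})) :
    ∃ c : k,
      θ ^ (Module.finrank k ↥(IntermediateField.adjoin k {θ})) = algebraMap k K c := by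
  let : Differential k := hδk.differential
  let : Differential K := hδK.differential
  have : DifferentialAlgebra k K := ⟨hres⟩
  have : IsAlgClosed K := IsAlgClosure.isAlgClosed k
  have : Algebra.IsAlgebraic k K := IsAlgClosure.isAlgebraic
  exact stmt_0_general (Algebra.IsIntegral.isIntegral θ) hθ fun σ _ => hmin σ
end

section
/- Let (k,′) be a differential field of characteristic zero, and let k(t) be the rational function field equipped with the derivation extending ′ and satisfying t′ = α₀ + α₁t + α₂t², where α₀, α₁, α₂ ∈ k and α₂ ≠ 0. Let n ≥ 1 be a natural number and let f ∈ k(t) be a nonzero solution of Y′ = n(α₁/2 + α₂t)Y. Then every γ in the algebraic closure k̄ of k that is a zero or a pole of f (i.e., a root of the numerator or of the denominator of f in reduced form) satisfies γ′ = α₀ + α₁γ + α₂γ², where ′ on k̄ is the unique extension of the derivation on k. -/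
open scoped TensorProduct

/-!
If `f = a / b` in lowest terms has a polynomial logarithmic derivative, then `a ∣ a′` and `b ∣ b′`.
In characteristic zero a divisibility `P ∣ P′` passes to the prime factors of `P`. After extending
scalars so that `γ` is rational, it applies to the factor `t - γ` of the numerator or of the
denominator, and `t - γ ∣ t′ - γ′` says exactly that `γ′` is the value of the polynomial `t′` at
`t = γ`.
-/

open Polynomial Differential

theorem prime_dvd_derivation_of_dvd_derivation {A R : Type*} [CommRing A] [CommRing R]
    [IsDomain R] [Algebra A R] (D : Derivation A R R) {μ P : R} (hμ : Prime μ)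
    (hfin : FiniteMultiplicity μ P) (hmult : ¬ μ ∣ (multiplicity μ P : R)) (hP : P ∣ D P) :
    μ ∣ D μ := by
  obtain ⟨g, hg, hμg⟩ := hfin.exists_eq_pow_mul_and_not_dvd
  obtain ⟨m, hm⟩ : ∃ m, multiplicity μ P = m + 1 :=
    Nat.exists_eq_add_one_of_ne_zero fun h ↦ hmult (by simp [h])
  rw [hm] at hg hmult
  obtain ⟨r, hr⟩ := hP
  have hdvd : μ ∣ ((m + 1 : ℕ) : R) * D μ * g := by
    refine ⟨g * r - D g, mul_left_cancel₀ (pow_ne_zero m hμ.ne_zero) ?_⟩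
    rw [hg, D.leibniz, D.leibniz_pow] at hr
    simp only [smul_eq_mul, nsmul_eq_mul, Nat.add_sub_cancel] at hr
    linear_combination hr
  exact (hμ.dvd_or_dvd ((hμ.dvd_or_dvd hdvd).resolve_right hμg)).resolve_left hmult

theorem dvd_deriv_and_dvd_deriv_of_isCoprime {R F : Type*} [CommRing R] [Differential R]
    [CommRing F] [Differential F] [Algebra R F] [FaithfulSMul R F] [DifferentialAlgebra R F]
    {f : F} {a b p : R} (hab : IsCoprime a b) (hfab : f * algebraMap R F b = algebraMap R F a)
    (hf : f′ = algebraMap R F p * f) : a ∣ a′ ∧ b ∣ b′ := by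
  have hdiv : a′ * b = p * a * b + a * b′ := by
    apply FaithfulSMul.algebraMap_injective R F
    have hderiv : f * algebraMap R F b′ + algebraMap R F b * (algebraMap R F p * f) =
        algebraMap R F a′ := by
      simpa only [Derivation.leibniz, smul_eq_mul, deriv_algebraMap, hf] using
        congrArg Differential.deriv hfab
    simp only [map_add, map_mul]
    rw [← hderiv, ← hfab]
    ring
  constructor
  · exact hab.dvd_of_dvd_mul_right ⟨p * b + b′, by linear_combination hdiv⟩
  · exact hab.symm.dvd_of_dvd_mul_left ⟨a′ - p * a, by linear_combination -hdiv⟩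

section ImplicitDeriv

variable {A B : Type*} [CommRing A] [Differential A] [CommRing B] [Differential B]
  [Algebra A B] [DifferentialAlgebra A B]

theorem map_implicitDeriv (v P : A[X]) :
    (implicitDeriv v P).map (algebraMap A B) =
      implicitDeriv (v.map (algebraMap A B)) (P.map (algebraMap A B)) := by
  let : Differential B[X] := ⟨implicitDeriv (v.map (algebraMap A B))⟩
  have : DifferentialAlgebra A B[X] := ⟨fun a ↦ by
    rw [Polynomial.algebraMap_apply, Polynomial.algebraMap_apply, ← deriv_algebraMap]
    exact implicitDeriv_C _ _⟩
  exact (deriv_aeval_eq_implicitDeriv X v (implicitDeriv_X _) P).symm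

theorem deriv_eq_eval_of_isRoot [IsDomain B] [CharZero B] {v P : B[X]} (hP₀ : P ≠ 0)
    (hP : P ∣ implicitDeriv v P) {γ : B} (hγ : P.IsRoot γ) : γ′ = v.eval γ := by
  have hmult : ¬ X - C γ ∣ (multiplicity (X - C γ) P : B[X]) := by
    rw [dvd_iff_isRoot, IsRoot, eval_natCast, Nat.cast_eq_zero, multiplicity_eq_zero, not_not]
    exact dvd_iff_isRoot.mpr hγ
  have hdvd : X - C γ ∣ implicitDeriv v (X - C γ) :=
    prime_dvd_derivation_of_dvd_derivation _ (prime_X_sub_C γ)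
      (finiteMultiplicity_X_sub_C γ hP₀) hmult hP
  rw [map_sub, implicitDeriv_X, implicitDeriv_C, dvd_iff_isRoot, IsRoot, eval_sub, eval_C,
    sub_eq_zero] at hdvd
  exact hdvd.symm

theorem deriv_eq_aeval_of_aeval_eq_zero [FaithfulSMul A B] [IsDomain B] [CharZero B] {v P : A[X]}
    (hP₀ : P ≠ 0) (hP : P ∣ implicitDeriv v P) {γ : B} (hγ : aeval γ P = 0) :
    γ′ = aeval γ v := by
  rw [← eval_map_algebraMap] at hγ ⊢
  refine deriv_eq_eval_of_isRoot
    ((Polynomial.map_ne_zero_iff (FaithfulSMul.algebraMap_injective A B)).mpr hP₀) ?_ hγ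
  rw [← map_implicitDeriv]
  exact Polynomial.map_dvd _ hP

end ImplicitDeriv

theorem num_dvd_implicitDeriv_and_denom_dvd_implicitDeriv {k : Type*} [Field k] [Differential k]
    [Differential (RatFunc k)] [DifferentialAlgebra k (RatFunc k)] {v p : k[X]}
    (ht : (RatFunc.X : RatFunc k)′ = algebraMap k[X] (RatFunc k) v) {f : RatFunc k}
    (hf : f′ = algebraMap k[X] (RatFunc k) p * f) :
    f.num ∣ implicitDeriv v f.num ∧ f.denom ∣ implicitDeriv v f.denom := by
  let : Differential k[X] := ⟨implicitDeriv v⟩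
  have : DifferentialAlgebra k[X] (RatFunc k) := ⟨fun q ↦ by
    rw [← RatFunc.aeval_X_left_eq_algebraMap] at ht
    rw [← RatFunc.aeval_X_left_eq_algebraMap, ← RatFunc.aeval_X_left_eq_algebraMap]
    exact deriv_aeval_eq_implicitDeriv RatFunc.X v ht q⟩
  have hfrac : f * algebraMap k[X] (RatFunc k) f.denom = algebraMap k[X] (RatFunc k) f.num :=
    ((div_eq_iff (RatFunc.algebraMap_ne_zero f.denom_ne_zero)).mp f.num_div_denom).symm
  exact dvd_deriv_and_dvd_deriv_of_isCoprime f.isCoprime_num_denom hfrac hf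

/-- The derivation `d` as a differential ring structure on `A`, which makes the library's theory
of differential algebras available for it. -/
abbrev IsRingDeriv.toDifferential {A : Type*} [CommRing A] {d : A → A} (hd : IsRingDeriv d) :
    Differential A where
  deriv := Derivation.mk' (AddMonoidHom.mk' d hd.map_add).toIntLinearMap fun x y ↦ by
    simpa [mul_comm, add_comm] using hd.leibniz x y

theorem stmt_1_general {k : Type*} [Field k] [CharZero k] {δk : k → k} (hδk : IsRingDeriv δk)
    {δF : RatFunc k → RatFunc k} (hδF : IsRingDeriv δF) (hres : RestrictsTo δk δF)
    {v p : k[X]} (ht : δF RatFunc.X = algebraMap k[X] (RatFunc k) v)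
    {f : RatFunc k} (hf0 : f ≠ 0) (hf : δF f = algebraMap k[X] (RatFunc k) p * f)
    {K : Type*} [CommRing K] [IsDomain K] [Algebra k K]
    {δK : K → K} (hδK : IsRingDeriv δK) (hresK : RestrictsTo δk δK)
    {γ : K} (hγ : aeval γ f.num = 0 ∨ aeval γ f.denom = 0) :
    δK γ = aeval γ v := by
  let _ := hδk.toDifferential
  let _ := hδF.toDifferential
  let _ := hδK.toDifferential
  have : DifferentialAlgebra k (RatFunc k) := ⟨hres⟩
  have : DifferentialAlgebra k K := ⟨hresK⟩
  have : CharZero K := charZero_of_injective_algebraMap (algebraMap k K).injective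
  obtain ⟨hnum, hdenom⟩ := num_dvd_implicitDeriv_and_denom_dvd_implicitDeriv (f := f) ht hf
  rcases hγ with hzero | hpole
  · exact deriv_eq_aeval_of_aeval_eq_zero (RatFunc.num_ne_zero hf0) hnum hzero
  · exact deriv_eq_aeval_of_aeval_eq_zero f.denom_ne_zero hdenom hpole

/-- Over the rational function field `k(t)` with `t′ = α₀ + α₁ t + α₂ t²`
(`α₂ ≠ 0`), every zero and pole (in the algebraic closure of `k`) of a nonzero solution
`f ∈ k(t)` of `Y′ = n(α₁/2 + α₂ t) Y` is a solution of the Riccati equation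
`X′ = α₀ + α₁ X + α₂ X²`. -/
theorem stmt_1 (k : Type*) [Field k] [CharZero k]
    (δk : k → k) (hδk : IsRingDeriv δk)
    (α₀ α₁ α₂ : k) (hα₂ : α₂ ≠ 0)
    (δF : RatFunc k → RatFunc k) (hδF : IsRingDeriv δF) (hres : RestrictsTo δk δF)
    (ht : δF RatFunc.X =
      RatFunc.C α₀ + RatFunc.C α₁ * RatFunc.X + RatFunc.C α₂ * RatFunc.X ^ 2)
    (n : ℕ) (hn : 1 ≤ n)
    (f : RatFunc k) (hf0 : f ≠ 0)
    (hf : δF f = (n : RatFunc k) * (RatFunc.C (α₁ / 2) + RatFunc.C α₂ * RatFunc.X) * f)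
    (K : Type*) [Field K] [Algebra k K] [IsAlgClosure k K]
    (δK : K → K) (hδK : IsRingDeriv δK) (hresK : RestrictsTo δk δK)
    (γ : K) (hγ : Polynomial.aeval γ f.num = 0 ∨ Polynomial.aeval γ f.denom = 0) :
    δK γ = algebraMap k K α₀ + algebraMap k K α₁ * γ + algebraMap k K α₂ * γ ^ 2 := by
  have h : δK γ = aeval γ (C α₀ + C α₁ * X + C α₂ * X ^ 2) :=
    stmt_1_general hδk hδF hres (p := (n : k[X]) * (C (α₁ / 2) + C α₂ * X))
      (by simpa using ht) hf0 (by simpa using hf) hδK hresK hγ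
  simpa using h
end

section
/- Let (k,′) be a differential field of characteristic zero, α, β ∈ kˣ, Q = (α,β)_k, ξ an element of an algebraic closure of k with ξ² = α, a₁, a₂, a₃ ∈ k, ϑ = a₁u + a₂v + a₃uv, and d = d_{(u,v)} + ∂_ϑ. Let (L,′) be a differential field extension of (k(ξ),′). If (Q,d) is split by (L,′), then the associated Riccati equation X′ = (a₂+a₃ξ)β + 2(a₁ξ + β′/(4β))X − (a₂−a₃ξ)X² has at least two distinct solutions in L. -/
open scoped TensorProduct

/-- The differential algebra `(Q, d)` over `(k, δk)` is split by the differential field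
`(L, δL)`: there is an `L`-algebra isomorphism `L ⊗[k] Q ≃ M₂(L)` intertwining the
induced derivation `d* = δL ⊗ id + id ⊗ d` with the coordinate-wise derivation on `M₂(L)`. -/
def DiffSplits (k : Type*) [Field k] (Q : Type*) [Ring Q] [Algebra k Q]
    (d : Q → Q) (L : Type*) [Field L] [Algebra k L] (δL : L → L) : Prop :=
  ∃ D : L ⊗[k] Q → L ⊗[k] Q,
    IsRingDeriv D ∧
    (∀ (y : L) (x : Q), D (y ⊗ₜ[k] x) = δL y ⊗ₜ[k] x + y ⊗ₜ[k] d x) ∧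
    ∃ φ : (L ⊗[k] Q) ≃ₐ[L] Matrix (Fin 2) (Fin 2) L,
      ∀ z, φ (D z) = (φ z).map δL

/-!
Let `U`, `V`, `T` be the images of `u`, `v`, `ϑ` in `M₂(L)`, and on `L²` consider the connection
`∇ y = y′ + T y`. That the splitting intertwines the derivations says that `∇` commutes with `U` and
`V` up to scalars: `∇ U = U ∇ + c U` with `c = α′/(2α)`, and `∇ V = V ∇ + e V` with `e = β′/(2β)`.
Since also `ξ′ = c ξ`, the connection preserves the line of `ξ`-eigenvectors of `U`, spanned by some
`w`, say `∇ w = l w`; then `∇ z = (l + e) z` for the `-ξ`-eigenvector `z = -V w`. Expressing `T` in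
the basis `w, z` turns this into a linear differential system `F′ = A F` for the invertible matrix
`F` with rows `w` and `z`. Each column of `F` with nonzero first entry yields the solution
`z j / w j` of the Riccati equation, independent columns yield distinct solutions, and a column with
zero first entry may be replaced by the sum of both columns.
-/

namespace IsRingDeriv

/-- An additive map satisfying the Leibniz rule on a commutative ring, as a bundled derivation of
Mathlib; this gives access to its calculus rules. -/
def toDerivation {A : Type*} [CommRing A] {δ : A → A} (hδ : IsRingDeriv δ) : Derivation ℤ A A :=
  Derivation.mk' (AddMonoidHom.mk' δ hδ.map_add).toIntLinearMap fun a b => by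
    simp only [AddMonoidHom.coe_toIntLinearMap, AddMonoidHom.mk'_apply, hδ.leibniz, smul_eq_mul]
    ring

theorem coe_toDerivation {A : Type*} [CommRing A] {δ : A → A} (hδ : IsRingDeriv δ) :
    ⇑hδ.toDerivation = δ :=
  rfl

theorem map_one_eq_zero {A : Type*} [Ring A] {d : A → A} (hd : IsRingDeriv d) : d 1 = 0 := by
  simpa using hd.leibniz 1 1

end IsRingDeriv

theorem DiffSplits.exists_algHom {k Q L : Type*} [Field k] [Ring Q] [Algebra k Q] [Field L]
    [Algebra k L] {d : Q → Q} {δL : L → L} (hδL : IsRingDeriv δL) (h : DiffSplits k Q d L δL) :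
    ∃ ψ : Q →ₐ[k] Matrix (Fin 2) (Fin 2) L, ∀ x, (ψ x).map δL = ψ (d x) := by
  obtain ⟨D, -, hD_tmul, φ, hφ⟩ := h
  refine ⟨(φ.restrictScalars k).toAlgHom.comp Algebra.TensorProduct.includeRight, fun x => ?_⟩
  change (φ (1 ⊗ₜ x)).map δL = φ (1 ⊗ₜ d x)
  rw [← hφ, hD_tmul, hδL.map_one_eq_zero, TensorProduct.zero_tmul, zero_add]

section

open Matrix

theorem exists_mem_apply_zero_ne_zero {R S : Type*} [CommRing R]
    [SetLike S (Fin 2 → R)] [AddSubmonoidClass S (Fin 2 → R)] {s : S} {x y : Fin 2 → R}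
    (hx : x ∈ s) (hy : y ∈ s) (hxy : x 0 * y 1 ≠ y 0 * x 1) :
    ∃ x ∈ s, ∃ y ∈ s, x 0 ≠ 0 ∧ y 0 ≠ 0 ∧ x 0 * y 1 ≠ y 0 * x 1 := by
  by_cases hx₀ : x 0 = 0
  · have hy₀ : y 0 ≠ 0 := fun hy₀ => hxy (by simp [hx₀, hy₀])
    refine ⟨x + y, add_mem hx hy, y, hy, by simpa [hx₀] using hy₀, hy₀, fun h => hxy ?_⟩
    simp only [Pi.add_apply] at h
    linear_combination h
  by_cases hy₀ : y 0 = 0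
  · refine ⟨x, hx, x + y, add_mem hx hy, hx₀, by simpa [hy₀] using hx₀, fun h => hxy ?_⟩
    simp only [Pi.add_apply] at h
    linear_combination h
  · exact ⟨x, hx, y, hy, hx₀, hy₀, hxy⟩

section LinearSystem

variable {R K n : Type*} [CommRing R] [Field K] [Algebra R K] (D : Derivation R K K)

theorem map_of_eq_mul {y z : n → K} {p q r s : K} (hy : D ∘ y = p • y + q • z)
    (hz : D ∘ z = r • y + s • z) :
    (of ![y, z]).map D = !![p, q; r, s] * of ![y, z] := by
  ext i j
  fin_cases i
  · simpa [mul_apply] using congrFun hy j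
  · simpa [mul_apply] using congrFun hz j

variable [Fintype n]

/-- The solutions `y` of the linear differential system `y′ = A y`. -/
def linearSolutions (A : Matrix n n K) : Submodule R (n → K) :=
  (D.toLinearMap.compLeft n).eqLocus (A.mulVecLin.restrictScalars R)

theorem mem_linearSolutions {A : Matrix n n K} {y : n → K} :
    y ∈ linearSolutions D A ↔ D ∘ y = A *ᵥ y :=
  Iff.rfl

theorem col_mem_linearSolutions {A F : Matrix n n K} (hF : F.map D = A * F) (j : n) :
    F.col j ∈ linearSolutions D A :=
  funext fun i => congrFun (congrFun hF i) j

theorem riccati_of_mem_linearSolutions {A : Matrix (Fin 2) (Fin 2) K} {y : Fin 2 → K}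
    (hy : y ∈ linearSolutions D A) (hy₀ : y 0 ≠ 0) :
    D (y 1 / y 0) =
      A 1 0 + (A 1 1 - A 0 0) * (y 1 / y 0) - A 0 1 * (y 1 / y 0) ^ 2 := by
  have hD (i : Fin 2) : D (y i) = A i 0 * y 0 + A i 1 * y 1 := by
    simpa [mulVec, dotProduct, Fin.sum_univ_two] using congrFun ((mem_linearSolutions D).1 hy) i
  rw [D.leibniz_div, hD, hD]
  simp only [smul_eq_mul]
  field_simp
  ring

theorem exists_ne_riccati_of_map_eq_mul {A F : Matrix (Fin 2) (Fin 2) K} (hF : F.map D = A * F)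
    (hF_det : F.det ≠ 0) :
    ∃ l₁ l₂ : K, l₁ ≠ l₂ ∧
      D l₁ = A 1 0 + (A 1 1 - A 0 0) * l₁ - A 0 1 * l₁ ^ 2 ∧
      D l₂ = A 1 0 + (A 1 1 - A 0 0) * l₂ - A 0 1 * l₂ ^ 2 := by
  rw [det_fin_two, sub_ne_zero] at hF_det
  obtain ⟨x, hx, y, hy, hx₀, hy₀, hxy⟩ := exists_mem_apply_zero_ne_zero
    (col_mem_linearSolutions D hF 0) (col_mem_linearSolutions D hF 1) hF_det
  refine ⟨x 1 / x 0, y 1 / y 0, fun h => hxy ?_,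
    riccati_of_mem_linearSolutions D hx hx₀, riccati_of_mem_linearSolutions D hy hy₀⟩
  linear_combination -(div_eq_div_iff hx₀ hy₀).1 h

end LinearSystem

section Connection

variable {R A n : Type*} [CommRing R] [CommRing A] [Algebra R A] [Fintype n]
  (D : Derivation R A A) (T : Matrix n n A)

/-- The connection `∇ y = y′ + T y` on the free module `Aⁿ` over the differential ring `A`. -/
def connection (y : n → A) : n → A :=
  D ∘ y + T *ᵥ y

theorem connection_smul (a : A) (y : n → A) :
    connection D T (a • y) = a • connection D T y + D a • y := by
  ext i
  simp only [connection, mulVec_smul, Pi.add_apply, Function.comp_apply, Pi.smul_apply,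
    smul_eq_mul, D.leibniz]
  ring

theorem derivation_comp_mulVec (M : Matrix n n A) (y : n → A) :
    D ∘ (M *ᵥ y) = M *ᵥ (D ∘ y) + M.map D *ᵥ y := by
  ext i
  simp [mulVec, dotProduct, Finset.sum_add_distrib, mul_comm]

variable {D T}

theorem connection_mulVec {M : Matrix n n A} {c : A} (hM : M.map D = c • M + (M * T - T * M))
    (y : n → A) :
    connection D T (M *ᵥ y) = M *ᵥ connection D T y + c • M *ᵥ y := by
  simp only [connection, derivation_comp_mulVec, hM, add_mulVec, sub_mulVec, smul_mulVec,
    ← mulVec_mulVec, mulVec_add]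
  abel

theorem mulVec_connection_of_eigenvector {M : Matrix n n A} {c μ : A} {w : n → A}
    (hM : M.map D = c • M + (M * T - T * M)) (hμ : D μ = c * μ) (hw : M *ᵥ w = μ • w) :
    M *ᵥ connection D T w = μ • connection D T w := by
  have h := connection_mulVec hM w
  rw [hw, connection_smul, hμ, mul_smul] at h
  exact (add_right_cancel h).symm

end Connection

section Anticommuting

variable {R n : Type*} [CommRing R] [Fintype n] {U V : Matrix n n R} {ξ b : R} {w : n → R}

theorem mulVec_mulVec_of_anticomm (hVU : V * U = -(U * V)) (hw : U *ᵥ w = ξ • w) :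
    U *ᵥ (V *ᵥ w) = -ξ • V *ᵥ w := by
  rw [mulVec_mulVec, ← neg_eq_iff_eq_neg.2 hVU, neg_mulVec, ← mulVec_mulVec, hw, mulVec_smul,
    neg_smul]

theorem mulVec_mulVec_of_mul_self [DecidableEq n] (hV : V * V = b • (1 : Matrix n n R))
    (y : n → R) : V *ᵥ (V *ᵥ y) = b • y := by
  rw [mulVec_mulVec, hV, smul_mulVec, one_mulVec]

theorem exists_eigenvector_of_anticomm [IsDomain R] [DecidableEq n] [Nonempty n] (hb : b ≠ 0)
    (hU : U * U = ξ ^ 2 • (1 : Matrix n n R)) (hV : V * V = b • (1 : Matrix n n R))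
    (hVU : V * U = -(U * V)) :
    ∃ w ≠ 0, U *ᵥ w = ξ • w := by
  obtain ⟨y, hy⟩ := exists_ne (0 : n → R)
  by_cases hUy : U *ᵥ y + ξ • y = 0
  · have hy_eigen : U *ᵥ y = -ξ • y := by rw [neg_smul, eq_neg_of_add_eq_zero_left hUy]
    refine ⟨V *ᵥ y, fun hVy => ?_, by simpa using mulVec_mulVec_of_anticomm hVU hy_eigen⟩
    exact smul_ne_zero hb hy (by rw [← mulVec_mulVec_of_mul_self hV, hVy, mulVec_zero])
  · refine ⟨_, hUy, ?_⟩
    rw [mulVec_add, mulVec_mulVec_of_mul_self hU, mulVec_smul]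
    module

end Anticommuting

section Eigenvectors

variable {K : Type*} [Field K] {μ ν : K}

theorem linearIndependent_of_eigenvectors {n : Type*} [Fintype n] {M : Matrix n n K} {w z : n → K}
    (hμν : μ ≠ ν) (hw₀ : w ≠ 0) (hz₀ : z ≠ 0)
    (hw : M *ᵥ w = μ • w) (hz : M *ᵥ z = ν • z) : LinearIndependent K ![w, z] := by
  refine Module.End.eigenvectors_linearIndependent' M.mulVecLin ![μ, ν]
    (List.nodup_ofFn.1 (by simpa using hμν)) _ fun i => ?_
  fin_cases i
  exacts [⟨Module.End.mem_eigenspace_iff.2 hw, hw₀⟩, ⟨Module.End.mem_eigenspace_iff.2 hz, hz₀⟩]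

theorem exists_eq_smul_of_eigenvectors {M : Matrix (Fin 2) (Fin 2) K} {w z y : Fin 2 → K}
    (hμν : μ ≠ ν) (hw₀ : w ≠ 0) (hz₀ : z ≠ 0) (hw : M *ᵥ w = μ • w) (hz : M *ᵥ z = ν • z)
    (hy : M *ᵥ y = μ • y) :
    ∃ l : K, y = l • w := by
  have hspan := (linearIndependent_of_eigenvectors hμν hw₀ hz₀ hw hz).span_eq_top_of_card_eq_finrank
    (by simp)
  obtain ⟨l, m, rfl⟩ : ∃ l m : K, l • w + m • z = y := by
    rw [← Submodule.mem_span_pair, ← range_cons_cons_empty w z ![], hspan]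
    trivial
  have hm : ((μ - ν) * m) • z = 0 := by
    rw [mulVec_add, mulVec_smul, mulVec_smul, hw, hz] at hy
    linear_combination (norm := module) -hy
  have hm₀ : m = 0 := by simpa [hz₀, sub_ne_zero.2 hμν] using hm
  exact ⟨l, by rw [hm₀, zero_smul, add_zero]⟩

end Eigenvectors

section Splitting

variable {R K : Type*} [CommRing R] [Field K] [NeZero (2 : K)] [Algebra R K]
  (D : Derivation R K K) {U V T : Matrix (Fin 2) (Fin 2) K} {ξ b a₁ a₂ a₃ c e : K}

theorem derivation_apply_of_sq_eq {a : K} (hξ₀ : ξ ≠ 0) (hξ : ξ ^ 2 = a) :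
    D ξ = D a / (2 * a) * ξ := by
  have h2 : (2 : K) ≠ 0 := two_ne_zero
  rw [← hξ, D.leibniz_pow]
  simp only [nsmul_eq_mul, smul_eq_mul]
  field_simp
  simp

theorem exists_eigenvector_connection_of_anticomm (hξ₀ : ξ ≠ 0) (hb : b ≠ 0) (hξ : D ξ = c * ξ)
    (hU : U * U = ξ ^ 2 • (1 : Matrix (Fin 2) (Fin 2) K))
    (hV : V * V = b • (1 : Matrix (Fin 2) (Fin 2) K)) (hVU : V * U = -(U * V))
    (hDU : U.map D = c • U + (U * T - T * U)) (hDV : V.map D = e • V + (V * T - T * V)) :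
    ∃ (w : Fin 2 → K) (l : K), LinearIndependent K ![w, V *ᵥ w] ∧ U *ᵥ w = ξ • w ∧
      connection D T w = l • w ∧ connection D T (V *ᵥ w) = (l + e) • V *ᵥ w := by
  obtain ⟨w, hw₀, hw⟩ := exists_eigenvector_of_anticomm hb hU hV hVU
  have hUVw := mulVec_mulVec_of_anticomm hVU hw
  have hVw₀ : V *ᵥ w ≠ 0 := fun hVw =>
    smul_ne_zero hb hw₀ (by rw [← mulVec_mulVec_of_mul_self hV, hVw, mulVec_zero])
  have hξ_ne : ξ ≠ -ξ := by
    rwa [Ne, eq_neg_iff_add_eq_zero, ← two_mul, mul_eq_zero, or_iff_right two_ne_zero]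
  obtain ⟨l, hl⟩ : ∃ l : K, connection D T w = l • w :=
    exists_eq_smul_of_eigenvectors hξ_ne hw₀ hVw₀ hw hUVw
      (mulVec_connection_of_eigenvector hDU hξ hw)
  refine ⟨w, l, linearIndependent_of_eigenvectors hξ_ne hw₀ hVw₀ hw hUVw, hw, hl, ?_⟩
  rw [connection_mulVec hDV, hl, mulVec_smul, add_smul]

theorem exists_fundamental_matrix (hξ₀ : ξ ≠ 0) (hb : b ≠ 0) (hξ : D ξ = c * ξ)
    (hU : U * U = ξ ^ 2 • (1 : Matrix (Fin 2) (Fin 2) K))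
    (hV : V * V = b • (1 : Matrix (Fin 2) (Fin 2) K)) (hVU : V * U = -(U * V))
    (hT : T = a₁ • U + a₂ • V + a₃ • (U * V))
    (hDU : U.map D = c • U + (U * T - T * U)) (hDV : V.map D = e • V + (V * T - T * V)) :
    ∃ (l : K) (F : Matrix (Fin 2) (Fin 2) K), F.det ≠ 0 ∧
      F.map D = !![l - a₁ * ξ, a₂ - a₃ * ξ; (a₂ + a₃ * ξ) * b, l + e + a₁ * ξ] * F := by
  obtain ⟨w, l, hind, hw, hl, hle⟩ :=
    exists_eigenvector_connection_of_anticomm D hξ₀ hb hξ hU hV hVU hDU hDV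
  have hUVw := mulVec_mulVec_of_anticomm hVU hw
  have hVVw := mulVec_mulVec_of_mul_self hV w
  have hTw : T *ᵥ w = (a₁ * ξ) • w + (a₂ - a₃ * ξ) • V *ᵥ w := by
    simp only [hT, add_mulVec, smul_mulVec, ← mulVec_mulVec, hw, hUVw]
    module
  have hTVw : T *ᵥ (V *ᵥ w) = ((a₂ + a₃ * ξ) * b) • w - (a₁ * ξ) • V *ᵥ w := by
    simp only [hT, add_mulVec, smul_mulVec, ← mulVec_mulVec (V *ᵥ w), hVVw, hUVw, mulVec_smul, hw]
    module
  have hDw : D ∘ w = (l - a₁ * ξ) • w + (a₂ - a₃ * ξ) • -(V *ᵥ w) := by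
    rw [connection, hTw] at hl
    linear_combination (norm := module) hl
  have hDVw : D ∘ (-(V *ᵥ w)) = ((a₂ + a₃ * ξ) * b) • w + (l + e + a₁ * ξ) • -(V *ᵥ w) := by
    have hD_neg : D ∘ (-(V *ᵥ w)) = -(D ∘ (V *ᵥ w)) := funext fun i => map_neg D _
    rw [connection, hTVw] at hle
    rw [hD_neg]
    linear_combination (norm := module) -hle
  refine ⟨l, of ![w, -(V *ᵥ w)], ?_, map_of_eq_mul D hDw hDVw⟩
  rw [← isUnit_iff_ne_zero, ← isUnit_iff_isUnit_det, ← linearIndependent_rows_iff_isUnit]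
  exact LinearIndependent.pair_neg_right_iff.2 hind

theorem exists_ne_riccati_of_anticomm {a : K} (ha : a ≠ 0) (hb : b ≠ 0) (hξ : ξ ^ 2 = a)
    (hU : U * U = a • (1 : Matrix (Fin 2) (Fin 2) K))
    (hV : V * V = b • (1 : Matrix (Fin 2) (Fin 2) K)) (hVU : V * U = -(U * V))
    (hT : T = a₁ • U + a₂ • V + a₃ • (U * V))
    (hDU : U.map D = (D a / (2 * a)) • U + (U * T - T * U))
    (hDV : V.map D = (D b / (2 * b)) • V + (V * T - T * V)) :
    ∃ l₁ l₂ : K, l₁ ≠ l₂ ∧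
      D l₁ = (a₂ + a₃ * ξ) * b + 2 * (a₁ * ξ + D b / (4 * b)) * l₁ - (a₂ - a₃ * ξ) * l₁ ^ 2 ∧
      D l₂ = (a₂ + a₃ * ξ) * b + 2 * (a₁ * ξ + D b / (4 * b)) * l₂ - (a₂ - a₃ * ξ) * l₂ ^ 2 := by
  have hξ₀ : ξ ≠ 0 := by rwa [← hξ, pow_ne_zero_iff two_ne_zero] at ha
  obtain ⟨l, F, hF_det, hF⟩ := exists_fundamental_matrix D hξ₀ hb
    (derivation_apply_of_sq_eq D hξ₀ hξ) (hξ ▸ hU) hV hVU hT hDU hDV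
  have hhalf : D b / (2 * b) = 2 * (D b / (4 * b)) := by
    rw [show 4 * b = 2 * (2 * b) by ring, ← mul_div_assoc, mul_div_mul_left _ _ two_ne_zero]
  have hcoeff : l + D b / (2 * b) + a₁ * ξ - (l - a₁ * ξ) = 2 * (a₁ * ξ + D b / (4 * b)) := by
    rw [hhalf]
    ring
  rw [← hcoeff]
  exact exists_ne_riccati_of_map_eq_mul D hF hF_det

end Splitting

end

theorem stmt_3_general {k Q L : Type*} [Field k] [NeZero (2 : k)] {δk : k → k} {α β : k}
    (hα : α ≠ 0) (hβ : β ≠ 0) [Ring Q] [Algebra k Q] {u v : Q}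
    (hu : u * u = algebraMap k Q α) (hv : v * v = algebraMap k Q β) (huv : v * u = -(u * v))
    {d : Q → Q} {a₁ a₂ a₃ : k} {ϑ : Q}
    (hϑ : ϑ = algebraMap k Q a₁ * u + algebraMap k Q a₂ * v + algebraMap k Q a₃ * (u * v))
    (hdu : d u = algebraMap k Q (δk α / (2 * α)) * u + (u * ϑ - ϑ * u))
    (hdv : d v = algebraMap k Q (δk β / (2 * β)) * v + (v * ϑ - ϑ * v))
    [Field L] [Algebra k L] {δL : L → L} (hδL : IsRingDeriv δL) (hresL : RestrictsTo δk δL)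
    {ξ : L} (hξ : ξ ^ 2 = algebraMap k L α) (hsplit : DiffSplits k Q d L δL) :
    ∃ l₁ l₂ : L, l₁ ≠ l₂ ∧
      (δL l₁ = (algebraMap k L a₂ + algebraMap k L a₃ * ξ) * algebraMap k L β
        + 2 * (algebraMap k L a₁ * ξ + algebraMap k L (δk β / (4 * β))) * l₁
        - (algebraMap k L a₂ - algebraMap k L a₃ * ξ) * l₁ ^ 2) ∧
      (δL l₂ = (algebraMap k L a₂ + algebraMap k L a₃ * ξ) * algebraMap k L β
        + 2 * (algebraMap k L a₁ * ξ + algebraMap k L (δk β / (4 * β))) * l₂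
        - (algebraMap k L a₂ - algebraMap k L a₃ * ξ) * l₂ ^ 2) := by
  obtain ⟨ψ, hψ⟩ := hsplit.exists_algHom hδL
  have hψ_mul (c : k) (x : Q) : ψ (algebraMap k Q c * x) = algebraMap k L c • ψ x := by
    rw [← Algebra.smul_def, map_smul, algebraMap_smul]
  have hψ_one (c : k) : ψ (algebraMap k Q c) = algebraMap k L c • 1 := by
    simpa using hψ_mul c 1
  have hψϑ : ψ ϑ = algebraMap k L a₁ • ψ u + algebraMap k L a₂ • ψ v
      + algebraMap k L a₃ • (ψ u * ψ v) := by
    simp only [hϑ, map_add, hψ_mul, map_mul]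
  have hψ_deriv {c : k} {x : Q}
      (hdx : d x = algebraMap k Q (δk c / (2 * c)) * x + (x * ϑ - ϑ * x)) :
      (ψ x).map δL = (δL (algebraMap k L c) / (2 * algebraMap k L c)) • ψ x
        + (ψ x * ψ ϑ - ψ ϑ * ψ x) := by
    simp only [hψ, hdx, map_add, map_sub, hψ_mul, map_mul, map_div₀, map_ofNat, hresL c]
  have : NeZero (2 : L) := NeZero.nat_of_injective (n := 2) (algebraMap k L).injective
  have hriccati := exists_ne_riccati_of_anticomm hδL.toDerivation ((map_ne_zero _).2 hα)
    ((map_ne_zero _).2 hβ) hξ (by rw [← map_mul, hu, hψ_one]) (by rw [← map_mul, hv, hψ_one])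
    (by rw [← map_mul, huv, map_neg, map_mul]) hψϑ (hψ_deriv hdu) (hψ_deriv hdv)
  simpa only [hδL.coe_toDerivation, hresL β, map_div₀, map_mul, map_ofNat] using hriccati

/-- If the differential quaternion algebra `(Q, d)` with
`d = d_{(u,v)} + ∂_ϑ`, `ϑ = a₁u + a₂v + a₃uv`, is split by a differential field
extension `(L, ′)` of `(k(ξ), ′)` (where `ξ² = α`), then the associated Riccati equation
`X′ = (a₂+a₃ξ)β + 2(a₁ξ + β′/(4β))X − (a₂−a₃ξ)X²` has two distinct solutions in `L`. -/
theorem stmt_3 (k : Type*) [Field k] [CharZero k]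
    (δk : k → k) (hδk : IsRingDeriv δk)
    (α β : k) (hα : α ≠ 0) (hβ : β ≠ 0)
    (Q : Type*) [Ring Q] [Algebra k Q]
    (u v : Q) (hu : u * u = algebraMap k Q α) (hv : v * v = algebraMap k Q β)
    (huv : v * u = -(u * v))
    (bQ : Module.Basis (Fin 4) k Q) (hbQ : ⇑bQ = ![1, u, v, u * v])
    (d : Q → Q) (hd : IsRingDeriv d) (hdk : RestrictsTo δk d)
    (a₁ a₂ a₃ : k) (ϑ : Q)
    (hϑ : ϑ = algebraMap k Q a₁ * u + algebraMap k Q a₂ * v + algebraMap k Q a₃ * (u * v))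
    (hdu : d u = algebraMap k Q (δk α / (2 * α)) * u + (u * ϑ - ϑ * u))
    (hdv : d v = algebraMap k Q (δk β / (2 * β)) * v + (v * ϑ - ϑ * v))
    (L : Type*) [Field L] [Algebra k L]
    (δL : L → L) (hδL : IsRingDeriv δL) (hresL : RestrictsTo δk δL)
    (ξ : L) (hξ : ξ ^ 2 = algebraMap k L α)
    (hsplit : DiffSplits k Q d L δL) :
    ∃ l₁ l₂ : L, l₁ ≠ l₂ ∧
      (δL l₁ = (algebraMap k L a₂ + algebraMap k L a₃ * ξ) * algebraMap k L β
        + 2 * (algebraMap k L a₁ * ξ + algebraMap k L (δk β / (4 * β))) * l₁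
        - (algebraMap k L a₂ - algebraMap k L a₃ * ξ) * l₁ ^ 2) ∧
      (δL l₂ = (algebraMap k L a₂ + algebraMap k L a₃ * ξ) * algebraMap k L β
        + 2 * (algebraMap k L a₁ * ξ + algebraMap k L (δk β / (4 * β))) * l₂
        - (algebraMap k L a₂ - algebraMap k L a₃ * ξ) * l₂ ^ 2) := by
  exact stmt_3_general hα hβ hu hv huv hϑ hdu hdv hδL hresL hξ hsplit
end

section
/- Let (k,′) be a differential field of characteristic zero, α, β ∈ kˣ, Q = (α,β)_k, ξ an element of an algebraic closure of k with ξ² = α, a₁, a₂, a₃ ∈ k, ϑ = a₁u + a₂v + a₃uv, and d = d_{(u,v)} + ∂_ϑ. Let (L,′) be a differential field extension of (k(ξ),′) containing two distinct solutions λ₁ ≠ λ₂ of the associated Riccati equation X′ = (a₂+a₃ξ)β + 2(a₁ξ + β′/(4β))X − (a₂−a₃ξ)X², and let μ be a nonzero element of a differential field extension of (L,′) satisfying μ′/μ = (a₂−a₃ξ)λ₁ − (a₁ξ + β′/(4β)). Then (Q,d) is split by (L(μ),′). -/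
open scoped TensorProduct

/-!
Over a field containing `ξ = √α`, the algebra `Q` becomes `M₂` via `u ↦ diag(ξ, -ξ)` and
`v ↦ (0 β; 1 0)`. Entrywise differentiation fails to match `d_{(u,v)}` only by the inner derivation
of `diag(c, -c)`, `c = β'/(4β)`, so `d` becomes `X ↦ X' + XP - PX` where `P` is the image of `ϑ`
plus `diag(c, -c)`. If `F` is invertible with `F' = PF`, conjugation by `F` turns this derivation
into `X ↦ X'`. The Riccati equation is the projectivization of the linear system `Y' = PY`: a
solution `λ` of the former lifts to the solution `(λμ, μ)` of the latter, where
`μ'/μ = (a₂ - a₃ξ)λ - (a₁ξ + c)`. As `P` has trace zero, `μ₂ = (μ (λ₁ - λ₂))⁻¹` lifts the second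
solution `λ₂`, and the two columns form a matrix `F` of determinant one.
-/

namespace IsRingDeriv

section Ring

variable {A : Type*} [Ring A] {δ : A → A}

protected theorem map_zero (h : IsRingDeriv δ) : δ 0 = 0 :=
  (AddMonoidHom.mk' δ h.map_add).map_zero

protected theorem map_one (h : IsRingDeriv δ) : δ 1 = 0 := by
  simpa using h.leibniz 1 1

protected theorem map_neg (h : IsRingDeriv δ) (x : A) : δ (-x) = -δ x :=
  (AddMonoidHom.mk' δ h.map_add).map_neg x

protected theorem map_sub (h : IsRingDeriv δ) (x y : A) : δ (x - y) = δ x - δ y :=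
  (AddMonoidHom.mk' δ h.map_add).map_sub x y

protected theorem map_sum (h : IsRingDeriv δ) {ι : Type*} (s : Finset ι) (f : ι → A) :
    δ (∑ i ∈ s, f i) = ∑ i ∈ s, δ (f i) :=
  map_sum (AddMonoidHom.mk' δ h.map_add) f s

theorem map_units_inv (h : IsRingDeriv δ) (x : Aˣ) :
    δ (↑x⁻¹ : A) = -(↑x⁻¹ * δ x * ↑x⁻¹) := by
  have hsum : δ (↑x⁻¹ : A) * x + ↑x⁻¹ * δ x = 0 := by
    rw [← h.leibniz, Units.inv_mul, h.map_one]
  rw [← neg_mul, ← Units.mul_inv_eq_iff_eq_mul, inv_inv]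
  exact eq_neg_of_add_eq_zero_left hsum

theorem add_inner (h : IsRingDeriv δ) (a : A) :
    IsRingDeriv fun x => δ x + (x * a - a * x) where
  map_add x y := by rw [h.map_add]; noncomm_ring
  leibniz x y := by rw [h.leibniz]; noncomm_ring

theorem matrix_map {n : Type*} [Fintype n] [DecidableEq n] (h : IsRingDeriv δ) :
    IsRingDeriv fun M : Matrix n n A => M.map δ where
  map_add M N := Matrix.map_add δ h.map_add M N
  leibniz M N := by
    ext i j
    simp only [Matrix.map_apply, Matrix.mul_apply, Matrix.add_apply, h.map_sum, h.leibniz,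
      Finset.sum_add_distrib]

theorem map_conj_of_map_eq_mul (h : IsRingDeriv δ) {a : A} {g : Aˣ} (hg : δ g = a * g) (x : A) :
    δ (↑g⁻¹ * x * g) = ↑g⁻¹ * (δ x + (x * a - a * x)) * g := by
  have hg_inv : δ (↑g⁻¹ : A) = -(↑g⁻¹ * a) := by
    rw [h.map_units_inv, hg, ← mul_assoc, Units.mul_inv_cancel_right]
  rw [h.leibniz, h.leibniz, hg, hg_inv]
  noncomm_ring

end Ring

section Field

variable {K : Type*} [Field K] {δ : K → K}

protected theorem map_inv (h : IsRingDeriv δ) (x : K) : δ x⁻¹ = -(x⁻¹ * δ x * x⁻¹) := by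
  rcases eq_or_ne x 0 with rfl | hx
  · simp [h.map_zero]
  · exact h.map_units_inv (Units.mk0 x hx)

theorem map_inv_of_map_eq_mul (h : IsRingDeriv δ) {c x : K} (hx : δ x = c * x) :
    δ x⁻¹ = -c * x⁻¹ := by
  rcases eq_or_ne x 0 with rfl | hx0
  · simp [h.map_zero]
  · rw [h.map_inv, hx]
    field_simp

theorem map_eq_logDeriv_sq_mul [NeZero (2 : K)] (h : IsRingDeriv δ) (x : K) :
    δ x = δ (x ^ 2) / (2 * x ^ 2) * x := by
  rcases eq_or_ne x 0 with rfl | hx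
  · simp [h.map_zero]
  · have h2 : (2 : K) ≠ 0 := NeZero.ne 2
    rw [pow_two, h.leibniz]
    field_simp
    ring

theorem map_mem_adjoin {k : Type*} [Field k] [Algebra k K] {δk : k → k} (h : IsRingDeriv δ)
    (hres : RestrictsTo δk δ) {s : Set K}
    (hs : ∀ x ∈ s, δ x ∈ IntermediateField.adjoin k s) {x : K}
    (hx : x ∈ IntermediateField.adjoin k s) : δ x ∈ IntermediateField.adjoin k s := by
  induction hx using IntermediateField.adjoin_induction with
  | mem x hx => exact hs x hx
  | algebraMap c => exact hres c ▸ IntermediateField.algebraMap_mem _ _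
  | add x y _ _ hδx hδy => exact h.map_add x y ▸ add_mem hδx hδy
  | inv x hx hδx => exact h.map_inv x ▸ neg_mem (mul_mem (mul_mem (inv_mem hx) hδx) (inv_mem hx))
  | mul x y hx hy hδx hδy => exact h.leibniz x y ▸ add_mem (mul_mem hδx hy) (mul_mem hx hδy)

theorem exists_restrict_adjoin {k : Type*} [Field k] [Algebra k K] {δk : k → k}
    (h : IsRingDeriv δ) (hres : RestrictsTo δk δ) {s : Set K}
    (hs : ∀ x ∈ s, δ x ∈ IntermediateField.adjoin k s) :
    ∃ δE : IntermediateField.adjoin k s → IntermediateField.adjoin k s,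
      IsRingDeriv δE ∧ RestrictsTo δk δE ∧ RestrictsTo δE δ :=
  ⟨fun x => ⟨δ x, h.map_mem_adjoin hres hs x.2⟩,
    ⟨fun _ _ => Subtype.ext (h.map_add _ _), fun _ _ => Subtype.ext (h.leibniz _ _)⟩,
    fun c => Subtype.ext (hres c), fun _ => rfl⟩

end Field

end IsRingDeriv

namespace RestrictsTo

variable {k : Type*} [CommRing k] {δk : k → k}

theorem trans {A B : Type*} [CommRing A] [Ring B] [Algebra k A] [Algebra A B] [Algebra k B]
    [IsScalarTower k A B] {δA : A → A} {δB : B → B} (h : RestrictsTo δk δA)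
    (h' : RestrictsTo δA δB) : RestrictsTo δk δB := fun c => by
  rw [IsScalarTower.algebraMap_apply k A B, h', h, ← IsScalarTower.algebraMap_apply]

theorem add_inner {A : Type*} [Ring A] [Algebra k A] {δ : A → A} (h : RestrictsTo δk δ) (a : A) :
    RestrictsTo δk fun x => δ x + (x * a - a * x) := fun c => by
  simp only [Algebra.commutes, sub_self, add_zero, h c]

theorem matrix_map {A : Type*} [CommRing A] [Algebra k A] {δ : A → A} {n : Type*} [Fintype n]
    [DecidableEq n] (h : RestrictsTo δk δ) (hδ : δ 0 = 0) :
    RestrictsTo δk fun M : Matrix n n A => M.map δ := fun c => by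
  simp only [Matrix.algebraMap_eq_diagonal, Matrix.diagonal_map hδ]
  exact congrArg Matrix.diagonal (funext fun _ => h c)

end RestrictsTo

theorem IsRingDeriv.algHom_comp_eq_of_adjoin_eq_top {k A B : Type*} [CommRing k] [Ring A] [Ring B]
    [Algebra k A] [Algebra k B] {δ : k → k} {dA : A → A} {dB : B → B} (hA : IsRingDeriv dA)
    (hB : IsRingDeriv dB) (hAk : RestrictsTo δ dA) (hBk : RestrictsTo δ dB) (ψ : A →ₐ[k] B)
    {s : Set A} (hs : Algebra.adjoin k s = ⊤) (hψ : ∀ x ∈ s, ψ (dA x) = dB (ψ x)) (x : A) :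
    ψ (dA x) = dB (ψ x) := by
  have hx : x ∈ Algebra.adjoin k s := hs ▸ Algebra.mem_top
  induction hx using Algebra.adjoin_induction with
  | mem x hx => exact hψ x hx
  | algebraMap c => rw [hAk, ψ.commutes, ψ.commutes, hBk]
  | add x y _ _ hx hy => rw [hA.map_add, _root_.map_add, _root_.map_add, hB.map_add, hx, hy]
  | mul x y _ _ hx hy =>
    rw [hA.leibniz, _root_.map_add, map_mul, map_mul, map_mul, hB.leibniz, hx, hy]

theorem exists_algEquiv_tensorProduct_of_span_range_eq_top {k A E B : Type*} [Field k] [Ring A]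
    [Algebra k A] [Module.Finite k A] [Field E] [Algebra k E] [Ring B] [Algebra k B] [Algebra E B]
    [IsScalarTower k E B] [Module.Finite E B] (hrank : Module.finrank k A = Module.finrank E B)
    (ψ : A →ₐ[k] B) (hψ : Submodule.span E (Set.range ψ) = ⊤) :
    ∃ φ : E ⊗[k] A ≃ₐ[E] B, ∀ a, φ (1 ⊗ₜ a) = ψ a := by
  let f : E ⊗[k] A →ₐ[E] B := AlgHom.liftEquiv k E A B ψ
  have hsurj : Function.Surjective f := LinearMap.range_eq_top.1 <|
    (LinearMap.range_liftBaseChange E ψ.toLinearMap).trans hψ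
  have hinj : Function.Injective f :=
    (LinearMap.injective_iff_surjective_of_finrank_eq_finrank (f := f.toLinearMap)
      (Module.finrank_baseChange.trans hrank)).2 hsurj
  exact ⟨AlgEquiv.ofBijective f ⟨hinj, hsurj⟩, fun a => one_smul E (ψ a)⟩

section Quaternion

variable {R A : Type*} [CommRing R] [Ring A] [Algebra R A]

/-- The quaternionic basis determined by anticommuting elements `i`, `j` with `i² = α` and
`j² = β`; the middle parameter is the coefficient of `i` in `i²`. -/
def quaternionBasisOfAnticomm {α β : R} {i j : A} (hi : i * i = algebraMap R A α)
    (hj : j * j = algebraMap R A β) (hij : j * i = -(i * j)) :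
    QuaternionAlgebra.Basis A α 0 β where
  i := i
  j := j
  k := i * j
  i_mul_i := by rw [hi, Algebra.algebraMap_eq_smul_one, zero_smul, add_zero]
  j_mul_j := by rw [hj, Algebra.algebraMap_eq_smul_one]
  i_mul_j := rfl
  j_mul_i := by rw [hij, zero_smul, zero_sub]

variable {c₁ c₂ c₃ : R} (q : QuaternionAlgebra.Basis A c₁ c₂ c₃) (b : Module.Basis (Fin 4) R A)

theorem bijective_quaternionBasis_liftHom (hb : ⇑b = ![1, q.i, q.j, q.k]) :
    Function.Bijective q.liftHom := by
  let e := (QuaternionAlgebra.linearEquivTuple c₁ c₂ c₃).trans b.equivFun.symm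
  have he : ⇑q.liftHom = e := funext fun x => by
    simp [e, hb, Module.Basis.equivFun_symm_apply, Fin.sum_univ_four,
      QuaternionAlgebra.Basis.lift, Algebra.algebraMap_eq_smul_one]
  exact he ▸ e.bijective

theorem adjoin_quaternionBasis_eq_top (hb : ⇑b = ![1, q.i, q.j, q.k]) :
    Algebra.adjoin R {q.i, q.j} = ⊤ := by
  have hi : q.i ∈ Algebra.adjoin R {q.i, q.j} := Algebra.subset_adjoin (by simp)
  have hj : q.j ∈ Algebra.adjoin R {q.i, q.j} := Algebra.subset_adjoin (by simp)
  rw [eq_top_iff, ← AlgHom.range_eq_top q.liftHom |>.2 (bijective_quaternionBasis_liftHom q b hb).2,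
    QuaternionAlgebra.Basis.range_liftHom, Algebra.adjoin_le_iff]
  rintro x (rfl | rfl | rfl)
  exacts [hi, hj, q.i_mul_j ▸ mul_mem hi hj]

theorem exists_algHom_of_quaternionBasis {B : Type*} [Ring B] [Algebra R B]
    (hb : ⇑b = ![1, q.i, q.j, q.k]) (q' : QuaternionAlgebra.Basis B c₁ c₂ c₃) :
    ∃ ψ : A →ₐ[R] B, ψ q.i = q'.i ∧ ψ q.j = q'.j := by
  let e := AlgEquiv.ofBijective q.liftHom (bijective_quaternionBasis_liftHom q b hb)
  have hi : e.symm q.i = (QuaternionAlgebra.Basis.self R).i := by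
    simp [e, AlgEquiv.symm_apply_eq, QuaternionAlgebra.Basis.lift]
  have hj : e.symm q.j = (QuaternionAlgebra.Basis.self R).j := by
    simp [e, AlgEquiv.symm_apply_eq, QuaternionAlgebra.Basis.lift]
  refine ⟨q'.liftHom.comp e.symm, ?_, ?_⟩
  · simp [hi, QuaternionAlgebra.Basis.lift]
  · simp [hj, QuaternionAlgebra.Basis.lift]

end Quaternion

section SplitMatrices

/-- The image of `u` under the splitting of `(ξ², b)`. -/
def splitI {E : Type*} [Ring E] (ξ : E) : Matrix (Fin 2) (Fin 2) E := !![ξ, 0; 0, -ξ]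

/-- The image of `v` under the splitting of `(ξ², b)`. -/
def splitJ {E : Type*} [Ring E] (b : E) : Matrix (Fin 2) (Fin 2) E := !![0, b; 1, 0]

theorem splitI_mul_self {E : Type*} [CommRing E] (ξ : E) :
    splitI ξ * splitI ξ = algebraMap E _ (ξ ^ 2) := by
  ext i j
  fin_cases i <;> fin_cases j <;> simp [splitI, Matrix.algebraMap_matrix_apply, pow_two]

theorem splitJ_mul_self {E : Type*} [CommRing E] (b : E) :
    splitJ b * splitJ b = algebraMap E _ b := by
  ext i j
  fin_cases i <;> fin_cases j <;> simp [splitJ, Matrix.algebraMap_matrix_apply]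

theorem splitJ_mul_splitI {E : Type*} [CommRing E] (ξ b : E) :
    splitJ b * splitI ξ = -(splitI ξ * splitJ b) := by
  ext i j
  fin_cases i <;> fin_cases j <;> simp [splitI, splitJ, mul_comm]

theorem eq_linearCombination_split {E : Type*} [Field E] [NeZero (2 : E)] {ξ b : E} (hξ : ξ ≠ 0)
    (hb : b ≠ 0) (M : Matrix (Fin 2) (Fin 2) E) :
    M = ((M 0 0 + M 1 1) / 2) • 1 + ((M 0 0 - M 1 1) / (2 * ξ)) • splitI ξ
      + ((M 0 1 / b + M 1 0) / 2) • splitJ b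
      + ((M 0 1 / b - M 1 0) / (2 * ξ)) • (splitI ξ * splitJ b) := by
  have h2 : (2 : E) ≠ 0 := NeZero.ne 2
  ext i j
  fin_cases i <;> fin_cases j <;> simp [splitI, splitJ] <;> field_simp <;> ring

theorem exists_algEquiv_tensorProduct_matrix {k Q E : Type*} [Field k] [Ring Q] [Algebra k Q]
    [Field E] [Algebra k E] [NeZero (2 : E)] {α β : k} (q : QuaternionAlgebra.Basis Q α 0 β)
    (b : Module.Basis (Fin 4) k Q) (hb : ⇑b = ![1, q.i, q.j, q.k]) (hα : α ≠ 0) (hβ : β ≠ 0)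
    {ξ : E} (hξ : ξ ^ 2 = algebraMap k E α) :
    ∃ φ : E ⊗[k] Q ≃ₐ[E] Matrix (Fin 2) (Fin 2) E,
      φ (1 ⊗ₜ q.i) = splitI ξ ∧ φ (1 ⊗ₜ q.j) = splitJ (algebraMap k E β) := by
  have hξ0 : ξ ≠ 0 := pow_ne_zero_iff two_ne_zero |>.1 <| hξ ▸ (map_ne_zero _).2 hα
  have hβ0 : algebraMap k E β ≠ 0 := (map_ne_zero _).2 hβ
  obtain ⟨ψ, (hψi : ψ q.i = splitI ξ), (hψj : ψ q.j = splitJ (algebraMap k E β))⟩ :=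
    exists_algHom_of_quaternionBasis q b hb <|
      quaternionBasisOfAnticomm (i := splitI ξ) (j := splitJ (algebraMap k E β))
        (by rw [splitI_mul_self, hξ, ← IsScalarTower.algebraMap_apply])
        (by rw [splitJ_mul_self, ← IsScalarTower.algebraMap_apply])
        (splitJ_mul_splitI ξ (algebraMap k E β))
  have hspan : Submodule.span E (Set.range ψ) = ⊤ := by
    have hmem (x : Q) : ψ x ∈ Submodule.span E (Set.range ψ) := Submodule.subset_span ⟨x, rfl⟩
    refine eq_top_iff.2 fun M _ => ?_
    rw [eq_linearCombination_split hξ0 hβ0 M, ← map_one ψ, ← hψi, ← hψj, ← map_mul]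
    exact add_mem (add_mem (add_mem (Submodule.smul_mem _ _ (hmem _))
      (Submodule.smul_mem _ _ (hmem _))) (Submodule.smul_mem _ _ (hmem _)))
      (Submodule.smul_mem _ _ (hmem _))
  have : Module.Finite k Q := .of_basis b
  have hrank : Module.finrank k Q = Module.finrank E (Matrix (Fin 2) (Fin 2) E) := by
    simp [Module.finrank_eq_card_basis b, Module.finrank_matrix]
  obtain ⟨φ, hφ⟩ := exists_algEquiv_tensorProduct_of_span_range_eq_top hrank ψ hspan
  exact ⟨φ, (hφ _).trans hψi, (hφ _).trans hψj⟩

theorem splitI_map_add_inner {E : Type*} [CommRing E] {δ : E → E} (h : IsRingDeriv δ) {ξ s : E}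
    (hξ : δ ξ = s * ξ) (c : E) :
    (splitI ξ).map δ + (splitI ξ * splitI c - splitI c * splitI ξ) = s • splitI ξ := by
  ext i j
  fin_cases i <;> fin_cases j <;> simp [splitI, h.map_zero, h.map_neg, hξ, mul_comm]

theorem splitJ_map_add_inner {E : Type*} [CommRing E] {δ : E → E} (h : IsRingDeriv δ) {b c : E}
    (hb : δ b = 4 * c * b) :
    (splitJ b).map δ + (splitJ b * splitI c - splitI c * splitJ b) = (2 * c) • splitJ b := by
  ext i j
  fin_cases i <;> fin_cases j <;> simp [splitI, splitJ, h.map_zero, h.map_one, hb] <;> ring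

end SplitMatrices

section Riccati

/-- The matrix of the linear system `Y' = PY` whose projectivization is the Riccati equation
`x' = q + 2px - rx²`, with `x` the ratio of the two coordinates of `Y`. -/
def riccatiMatrix {E : Type*} [Ring E] (p q r : E) : Matrix (Fin 2) (Fin 2) E := !![p, q; r, -p]

theorem riccatiMatrix_eq_split {E : Type*} [CommRing E] (ξ b c a₁ a₂ a₃ : E) :
    riccatiMatrix (a₁ * ξ + c) ((a₂ + a₃ * ξ) * b) (a₂ - a₃ * ξ)
      = a₁ • splitI ξ + a₂ • splitJ b + a₃ • (splitI ξ * splitJ b) + splitI c := by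
  ext i j
  fin_cases i <;> fin_cases j <;> simp [riccatiMatrix, splitI, splitJ] <;> ring

variable {E : Type*} [Field E] {δ : E → E} {p q r l₁ l₂ μ : E}

theorem IsRingDeriv.map_mul_of_riccati (h : IsRingDeriv δ)
    (hl : δ l₁ = q + 2 * p * l₁ - r * l₁ ^ 2) (hμ : δ μ = (r * l₁ - p) * μ) :
    δ (l₁ * μ) = p * (l₁ * μ) + q * μ := by
  rw [h.leibniz, hl, hμ]
  ring

theorem IsRingDeriv.map_inv_mul_sub_of_riccati (h : IsRingDeriv δ)
    (hl₁ : δ l₁ = q + 2 * p * l₁ - r * l₁ ^ 2) (hl₂ : δ l₂ = q + 2 * p * l₂ - r * l₂ ^ 2)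
    (hμ : δ μ = (r * l₁ - p) * μ) :
    δ (μ * (l₁ - l₂))⁻¹ = (r * l₂ - p) * (μ * (l₁ - l₂))⁻¹ := by
  have hw : δ (μ * (l₁ - l₂)) = -(r * l₂ - p) * (μ * (l₁ - l₂)) := by
    rw [h.leibniz, h.map_sub, hl₁, hl₂, hμ]
    ring
  rw [h.map_inv_of_map_eq_mul hw, neg_neg]

theorem IsRingDeriv.exists_units_map_eq_riccatiMatrix_mul (h : IsRingDeriv δ) (hne : l₁ ≠ l₂)
    (hl₁ : δ l₁ = q + 2 * p * l₁ - r * l₁ ^ 2) (hl₂ : δ l₂ = q + 2 * p * l₂ - r * l₂ ^ 2)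
    (hμ0 : μ ≠ 0) (hμ : δ μ = (r * l₁ - p) * μ) :
    ∃ F : (Matrix (Fin 2) (Fin 2) E)ˣ,
      (F : Matrix (Fin 2) (Fin 2) E).map δ = riccatiMatrix p q r * F := by
  let η := (μ * (l₁ - l₂))⁻¹
  have hη : δ η = (r * l₂ - p) * η := h.map_inv_mul_sub_of_riccati hl₁ hl₂ hμ
  let F : Matrix (Fin 2) (Fin 2) E := !![l₁ * μ, l₂ * η; μ, η]
  have hdet : F.det = 1 := by
    have : l₁ - l₂ ≠ 0 := sub_ne_zero.2 hne
    simp only [F, η, Matrix.det_fin_two_of]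
    field_simp
  refine ⟨F.nonsingInvUnit (hdet ▸ isUnit_one), ?_⟩
  change F.map δ = _ * F
  ext i j
  fin_cases i <;> fin_cases j <;>
    simp [F, riccatiMatrix, h.map_mul_of_riccati hl₁ hμ, h.map_mul_of_riccati hl₂ hη, hμ, hη] <;>
    ring

end Riccati

namespace DiffSplits

variable {k Q E : Type*} [Field k] [Ring Q] [Algebra k Q] [Field E] [Algebra k E]
  {δk : k → k} {d : Q → Q} {δ : E → E}

theorem of_algEquiv (h : IsRingDeriv δ) (φ : E ⊗[k] Q ≃ₐ[E] Matrix (Fin 2) (Fin 2) E)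
    (hφ : ∀ x, φ (1 ⊗ₜ d x) = (φ (1 ⊗ₜ x)).map δ) : DiffSplits k Q d E δ := by
  have hmat : IsRingDeriv fun M : Matrix (Fin 2) (Fin 2) E => M.map δ := h.matrix_map
  have hφ_tmul (y : E) (x : Q) : φ (y ⊗ₜ x) = y • φ (1 ⊗ₜ x) := by
    rw [← map_smul, TensorProduct.smul_tmul', smul_eq_mul, mul_one]
  refine ⟨fun z => φ.symm ((φ z).map δ), ⟨fun x y => ?_, fun x y => ?_⟩, fun y x => ?_, φ,
    fun z => φ.apply_symm_apply _⟩
  · rw [map_add, hmat.map_add, map_add]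
  · rw [map_mul, hmat.leibniz, map_add, map_mul, map_mul, φ.symm_apply_apply, φ.symm_apply_apply]
  · rw [AlgEquiv.symm_apply_eq, map_add, hφ_tmul y x, hφ_tmul y (d x), hφ_tmul (δ y) x, hφ]
    ext i j
    simp [h.leibniz]

theorem of_gauge (h : IsRingDeriv δ) (φ : E ⊗[k] Q ≃ₐ[E] Matrix (Fin 2) (Fin 2) E)
    {P : Matrix (Fin 2) (Fin 2) E}
    (hφ : ∀ x, φ (1 ⊗ₜ d x) = (φ (1 ⊗ₜ x)).map δ + (φ (1 ⊗ₜ x) * P - P * φ (1 ⊗ₜ x)))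
    (F : (Matrix (Fin 2) (Fin 2) E)ˣ) (hF : (F : Matrix (Fin 2) (Fin 2) E).map δ = P * F) :
    DiffSplits k Q d E δ := by
  let conj := MulSemiringAction.toAlgEquiv E (Matrix (Fin 2) (Fin 2) E) (ConjAct.toConjAct F⁻¹)
  have hconj (M : Matrix (Fin 2) (Fin 2) E) :
      conj M = (↑F⁻¹ : Matrix (Fin 2) (Fin 2) E) * M * F := by
    simp [conj, ConjAct.units_smul_def]
  refine of_algEquiv h (φ.trans conj) fun x => ?_
  simp only [AlgEquiv.trans_apply, hconj, hφ]
  exact (h.matrix_map.map_conj_of_map_eq_mul hF _).symm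

theorem map_eq_matrix_map_add_inner [NeZero (2 : E)] {α β : k} (hβ : β ≠ 0)
    (B : QuaternionAlgebra.Basis Q α 0 β) (b : Module.Basis (Fin 4) k Q)
    (hb : ⇑b = ![1, B.i, B.j, B.k]) (hd : IsRingDeriv d) (hdk : RestrictsTo δk d) {ϑ : Q}
    (hdi : d B.i = algebraMap k Q (δk α / (2 * α)) * B.i + (B.i * ϑ - ϑ * B.i))
    (hdj : d B.j = algebraMap k Q (δk β / (2 * β)) * B.j + (B.j * ϑ - ϑ * B.j))
    (h : IsRingDeriv δ) (hres : RestrictsTo δk δ) {ξ : E} (hξ : ξ ^ 2 = algebraMap k E α)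
    (ψ : Q →ₐ[k] Matrix (Fin 2) (Fin 2) E) (hψi : ψ B.i = splitI ξ)
    (hψj : ψ B.j = splitJ (algebraMap k E β)) {c : E}
    (hc : c = algebraMap k E (δk β / (4 * β))) {P : Matrix (Fin 2) (Fin 2) E}
    (hP : P = ψ ϑ + splitI c) (x : Q) :
    ψ (d x) = (ψ x).map δ + (ψ x * P - P * ψ x) := by
  have hδξ : δ ξ = algebraMap k E (δk α / (2 * α)) * ξ := by
    rw [h.map_eq_logDeriv_sq_mul, hξ, hres, map_div₀, map_mul, map_ofNat]
  have hβ0 : algebraMap k E β ≠ 0 := (map_ne_zero _).2 hβ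
  have h2 : (2 : E) ≠ 0 := NeZero.ne 2
  have h4 : (4 : E) ≠ 0 := by
    convert mul_ne_zero h2 h2
    norm_num
  have hδβ : δ (algebraMap k E β) = 4 * c * algebraMap k E β := by
    rw [hres, hc, map_div₀, map_mul, map_ofNat]
    field_simp
  have hhalf : algebraMap k E (δk β / (2 * β)) = 2 * c := by
    simp only [hc, map_div₀, map_mul, map_ofNat]
    field_simp
    norm_num
  refine hd.algHom_comp_eq_of_adjoin_eq_top (h.matrix_map.add_inner P) hdk
    ((hres.matrix_map h.map_zero).add_inner P) ψ (adjoin_quaternionBasis_eq_top B b hb) ?_ x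
  rintro x (rfl | rfl)
  · rw [hdi, ← Algebra.smul_def, map_add, map_smul, map_sub, map_mul, map_mul, hψi,
      ← algebraMap_smul E, ← splitI_map_add_inner h hδξ c, hP]
    noncomm_ring
  · rw [hdj, ← Algebra.smul_def, map_add, map_smul, map_sub, map_mul, map_mul, hψj,
      ← algebraMap_smul E, hhalf, ← splitJ_map_add_inner h hδβ, hP]
    noncomm_ring

theorem of_riccati [NeZero (2 : k)] {α β : k} (hα : α ≠ 0) (hβ : β ≠ 0)
    (B : QuaternionAlgebra.Basis Q α 0 β) (b : Module.Basis (Fin 4) k Q)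
    (hb : ⇑b = ![1, B.i, B.j, B.k]) (hd : IsRingDeriv d) (hdk : RestrictsTo δk d) {a₁ a₂ a₃ : k}
    {ϑ : Q} (hϑ : ϑ = algebraMap k Q a₁ * B.i + algebraMap k Q a₂ * B.j + algebraMap k Q a₃ * B.k)
    (hdi : d B.i = algebraMap k Q (δk α / (2 * α)) * B.i + (B.i * ϑ - ϑ * B.i))
    (hdj : d B.j = algebraMap k Q (δk β / (2 * β)) * B.j + (B.j * ϑ - ϑ * B.j))
    (h : IsRingDeriv δ) (hres : RestrictsTo δk δ) {ξ l₁ l₂ μ p q r : E}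
    (hξ : ξ ^ 2 = algebraMap k E α)
    (hp : p = algebraMap k E a₁ * ξ + algebraMap k E (δk β / (4 * β)))
    (hq : q = (algebraMap k E a₂ + algebraMap k E a₃ * ξ) * algebraMap k E β)
    (hr : r = algebraMap k E a₂ - algebraMap k E a₃ * ξ) (hne : l₁ ≠ l₂)
    (hl₁ : δ l₁ = q + 2 * p * l₁ - r * l₁ ^ 2) (hl₂ : δ l₂ = q + 2 * p * l₂ - r * l₂ ^ 2)
    (hμ0 : μ ≠ 0) (hμ : δ μ = (r * l₁ - p) * μ) : DiffSplits k Q d E δ := by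
  have : NeZero (2 : E) :=
    ⟨by simpa only [map_ofNat] using (map_ne_zero (algebraMap k E)).2 (NeZero.ne 2)⟩
  obtain ⟨φ, hφi, hφj⟩ := exists_algEquiv_tensorProduct_matrix B b hb hα hβ hξ
  let ψ : Q →ₐ[k] Matrix (Fin 2) (Fin 2) E :=
    (φ.toAlgHom.restrictScalars k).comp Algebra.TensorProduct.includeRight
  have hP : riccatiMatrix p q r = ψ ϑ + splitI (algebraMap k E (δk β / (4 * β))) := by
    have hψi : ψ B.i = splitI ξ := hφi
    have hψj : ψ B.j = splitJ (algebraMap k E β) := hφj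
    rw [hp, hq, hr, riccatiMatrix_eq_split, hϑ]
    simp only [← B.i_mul_j, ← Algebra.smul_def, map_add, map_smul, map_mul, hψi, hψj,
      algebraMap_smul]
  obtain ⟨F, hF⟩ := h.exists_units_map_eq_riccatiMatrix_mul hne hl₁ hl₂ hμ0 hμ
  exact of_gauge h φ
    (map_eq_matrix_map_add_inner hβ B b hb hd hdk hdi hdj h hres hξ ψ hφi hφj rfl hP) F hF

end DiffSplits

open scoped IntermediateField in
theorem stmt_4_general (k : Type*) [Field k] [NeZero (2 : k)]
    (δk : k → k) (α β : k) (hα : α ≠ 0) (hβ : β ≠ 0)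
    (Q : Type*) [Ring Q] [Algebra k Q]
    (u v : Q) (hu : u * u = algebraMap k Q α) (hv : v * v = algebraMap k Q β)
    (huv : v * u = -(u * v))
    (bQ : Module.Basis (Fin 4) k Q) (hbQ : ⇑bQ = ![1, u, v, u * v])
    (d : Q → Q) (hd : IsRingDeriv d) (hdk : RestrictsTo δk d)
    (a₁ a₂ a₃ : k) (ϑ : Q)
    (hϑ : ϑ = algebraMap k Q a₁ * u + algebraMap k Q a₂ * v + algebraMap k Q a₃ * (u * v))
    (hdu : d u = algebraMap k Q (δk α / (2 * α)) * u + (u * ϑ - ϑ * u))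
    (hdv : d v = algebraMap k Q (δk β / (2 * β)) * v + (v * ϑ - ϑ * v))
    (L : Type*) [Field L] [Algebra k L]
    (δL : L → L) (hresL : RestrictsTo δk δL)
    (ξ : L) (hξ : ξ ^ 2 = algebraMap k L α)
    (l₁ l₂ : L) (hne : l₁ ≠ l₂)
    (hl₁ : δL l₁ = (algebraMap k L a₂ + algebraMap k L a₃ * ξ) * algebraMap k L β
        + 2 * (algebraMap k L a₁ * ξ + algebraMap k L (δk β / (4 * β))) * l₁
        - (algebraMap k L a₂ - algebraMap k L a₃ * ξ) * l₁ ^ 2)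
    (hl₂ : δL l₂ = (algebraMap k L a₂ + algebraMap k L a₃ * ξ) * algebraMap k L β
        + 2 * (algebraMap k L a₁ * ξ + algebraMap k L (δk β / (4 * β))) * l₂
        - (algebraMap k L a₂ - algebraMap k L a₃ * ξ) * l₂ ^ 2)
    (N : Type*) [Field N] [Algebra k N] [Algebra L N] [IsScalarTower k L N]
    (δN : N → N) (hδN : IsRingDeriv δN) (hresN : RestrictsTo δL δN)
    (μ : N) (hμ0 : μ ≠ 0)
    (hμ : δN μ = algebraMap L N
      ((algebraMap k L a₂ - algebraMap k L a₃ * ξ) * l₁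
        - (algebraMap k L a₁ * ξ + algebraMap k L (δk β / (4 * β)))) * μ) :
    ∃ δE : L⟮μ⟯ → L⟮μ⟯,
      IsRingDeriv δE ∧
      (∀ x : L⟮μ⟯, algebraMap L⟮μ⟯ N (δE x) = δN (algebraMap L⟮μ⟯ N x)) ∧
      DiffSplits k Q d L⟮μ⟯ δE := by
  have hclosed : ∀ x ∈ ({μ} : Set N), δN x ∈ L⟮μ⟯ := by
    rintro x rfl
    exact hμ ▸ mul_mem (IntermediateField.algebraMap_mem _ _)
      (IntermediateField.mem_adjoin_simple_self L x)
  obtain ⟨δE, hδE, hLE, hEN⟩ := hδN.exists_restrict_adjoin hresN hclosed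
  refine ⟨δE, hδE, fun x => (hEN x).symm, ?_⟩
  refine DiffSplits.of_riccati hα hβ (quaternionBasisOfAnticomm hu hv huv) bQ hbQ hd hdk hϑ hdu hdv
    hδE (hresL.trans hLE) (ξ := algebraMap L L⟮μ⟯ ξ) (l₁ := algebraMap L L⟮μ⟯ l₁)
    (l₂ := algebraMap L L⟮μ⟯ l₂) (μ := IntermediateField.AdjoinSimple.gen L μ) ?_ rfl rfl rfl
    ((algebraMap L L⟮μ⟯).injective.ne hne) ?_ ?_ ?_ ?_
  · rw [← map_pow, hξ, ← IsScalarTower.algebraMap_apply]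
  · simp only [hLE l₁, hl₁, IsScalarTower.algebraMap_apply k L L⟮μ⟯, map_add, map_sub, map_mul,
      map_pow, map_ofNat]
  · simp only [hLE l₂, hl₂, IsScalarTower.algebraMap_apply k L L⟮μ⟯, map_add, map_sub, map_mul,
      map_pow, map_ofNat]
  · exact fun h => hμ0 (congrArg Subtype.val h)
  · simp only [IsScalarTower.algebraMap_apply k L L⟮μ⟯, ← map_add, ← map_sub, ← map_mul]
    exact Subtype.ext ((hEN _).symm.trans hμ)

/-- If `(L, ′)` is a differential field extension of `(k(ξ), ′)`
containing two distinct solutions `λ₁ ≠ λ₂` of the associated Riccati equation, and `μ`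
is a nonzero element of a differential field extension of `L` with
`μ′/μ = (a₂−a₃ξ)λ₁ − (a₁ξ + β′/(4β))`, then `(Q, d)` is split by `(L(μ), ′)`. -/
theorem stmt_4 (k : Type*) [Field k] [CharZero k]
    (δk : k → k) (hδk : IsRingDeriv δk)
    (α β : k) (hα : α ≠ 0) (hβ : β ≠ 0)
    (Q : Type*) [Ring Q] [Algebra k Q]
    (u v : Q) (hu : u * u = algebraMap k Q α) (hv : v * v = algebraMap k Q β)
    (huv : v * u = -(u * v))
    (bQ : Module.Basis (Fin 4) k Q) (hbQ : ⇑bQ = ![1, u, v, u * v])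
    (d : Q → Q) (hd : IsRingDeriv d) (hdk : RestrictsTo δk d)
    (a₁ a₂ a₃ : k) (ϑ : Q)
    (hϑ : ϑ = algebraMap k Q a₁ * u + algebraMap k Q a₂ * v + algebraMap k Q a₃ * (u * v))
    (hdu : d u = algebraMap k Q (δk α / (2 * α)) * u + (u * ϑ - ϑ * u))
    (hdv : d v = algebraMap k Q (δk β / (2 * β)) * v + (v * ϑ - ϑ * v))
    (L : Type*) [Field L] [Algebra k L]
    (δL : L → L) (hδL : IsRingDeriv δL) (hresL : RestrictsTo δk δL)
    (ξ : L) (hξ : ξ ^ 2 = algebraMap k L α)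
    (l₁ l₂ : L) (hne : l₁ ≠ l₂)
    (hl₁ : δL l₁ = (algebraMap k L a₂ + algebraMap k L a₃ * ξ) * algebraMap k L β
        + 2 * (algebraMap k L a₁ * ξ + algebraMap k L (δk β / (4 * β))) * l₁
        - (algebraMap k L a₂ - algebraMap k L a₃ * ξ) * l₁ ^ 2)
    (hl₂ : δL l₂ = (algebraMap k L a₂ + algebraMap k L a₃ * ξ) * algebraMap k L β
        + 2 * (algebraMap k L a₁ * ξ + algebraMap k L (δk β / (4 * β))) * l₂
        - (algebraMap k L a₂ - algebraMap k L a₃ * ξ) * l₂ ^ 2)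
    (N : Type*) [Field N] [Algebra k N] [Algebra L N] [IsScalarTower k L N]
    (δN : N → N) (hδN : IsRingDeriv δN) (hresN : RestrictsTo δL δN)
    (μ : N) (hμ0 : μ ≠ 0)
    (hμ : δN μ = algebraMap L N
      ((algebraMap k L a₂ - algebraMap k L a₃ * ξ) * l₁
        - (algebraMap k L a₁ * ξ + algebraMap k L (δk β / (4 * β)))) * μ) :
    ∃ δE : ↥(IntermediateField.adjoin L {μ}) → ↥(IntermediateField.adjoin L {μ}),
      IsRingDeriv δE ∧
      (∀ x : ↥(IntermediateField.adjoin L {μ}),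
        algebraMap ↥(IntermediateField.adjoin L {μ}) N (δE x)
          = δN (algebraMap ↥(IntermediateField.adjoin L {μ}) N x)) ∧
      DiffSplits k Q d ↥(IntermediateField.adjoin L {μ}) δE :=
  stmt_4_general k δk α β hα hβ Q u v hu hv huv bQ hbQ d hd hdk a₁ a₂ a₃ ϑ hϑ hdu hdv L δL hresL
    ξ hξ l₁ l₂ hne hl₁ hl₂ N δN hδN hresN μ hμ0 hμ
end
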